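/- arXiv:1810.05545 — 3 statements merged into one kernel-verified Lean document; each statement's English description precedes it below -/
import Mathlib

section
/- Let A = (L_1,L_2,L_3,L_4) encode a (4,1) valise adinkra and set X_A := Σ_{I<J} L_Iᵀ·L_J (sum over the six pairs I < J in {1,2,3,4}). Then trace(X_A·X_A) = trace((L_1ᵀ·L_2 + L_3ᵀ·L_4)²) + trace((L_1ᵀ·L_3 + L_2ᵀ·L_4)²) + trace((L_1ᵀ·L_4 + L_2ᵀ·L_3)²). -/
open Matrix

/-- A signed permutation matrix: exactly one nonzero entry in each row and column,
that entry being `1` or `-1`. -/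
def IsSignedPerm {n : ℕ} (M : Matrix (Fin n) (Fin n) ℤ) : Prop :=
  (∀ i j, M i j = 0 ∨ M i j = 1 ∨ M i j = -1) ∧
  (∀ i, ∃! j, M i j ≠ 0) ∧
  (∀ j, ∃! i, M i j ≠ 0)

/-- The garden algebra relations for a family of `d × d` integer matrices. -/
def GardenRel {d N : ℕ} (L : Fin N → Matrix (Fin d) (Fin d) ℤ) : Prop :=
  ∀ I J : Fin N,
    (L I * (L J)ᵀ + L J * (L I)ᵀ =
      if I = J then (2 : ℤ) • (1 : Matrix (Fin d) (Fin d) ℤ) else 0) ∧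
    ((L I)ᵀ * L J + (L J)ᵀ * L I =
      if I = J then (2 : ℤ) • (1 : Matrix (Fin d) (Fin d) ℤ) else 0)

/-- The L-matrices of a (4,1) valise adinkra: a quadruple of 4×4 integer signed
permutation matrices satisfying the garden algebra relations. -/
def IsAdinkra (L : Fin 4 → Matrix (Fin 4) (Fin 4) ℤ) : Prop :=
  (∀ I, IsSignedPerm (L I)) ∧ GardenRel L

/-!
Write `V I J = (L I)ᵀ * L J`. Then `V J I = -V I J` for `I ≠ J`, so `V I J` has trace zero; and
since `L J * (L J)ᵀ = 1`, products telescope: `V I J * V J K = V I K`. Hence `V I J * V K M` has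
trace zero as soon as `{I, J}` and `{K, M}` share exactly one index. Two pairs of indices out of
four that belong to different perfect matchings share exactly one index, so the three matching sums
that make up `X` are pairwise orthogonal for the trace form, and the formula for `trace (X * X)` is
Pythagoras' theorem.
-/

section Trace

variable {n R : Type*} [Fintype n]

theorem trace_eq_zero_of_transpose_eq_neg [AddCommGroup R] [IsAddTorsionFree R]
    {A : Matrix n n R} (hA : Aᵀ = -A) : trace A = 0 := by
  rw [← self_eq_neg, ← trace_neg, ← hA, trace_transpose]

theorem trace_add_add_mul_self_of_trace_mul_eq_zero [NonUnitalCommSemiring R]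
    {P Q S : Matrix n n R}
    (hPQ : trace (P * Q) = 0) (hPS : trace (P * S) = 0) (hQS : trace (Q * S) = 0) :
    trace ((P + Q + S) * (P + Q + S)) = trace (P * P) + trace (Q * Q) + trace (S * S) := by
  simp only [Matrix.add_mul, Matrix.mul_add, trace_add, hPQ, hPS, hQS, trace_mul_comm Q P,
    trace_mul_comm S P, trace_mul_comm S Q, add_zero, zero_add]

end Trace

/-- The part of the garden algebra that governs the products `(L I)ᵀ * L J`: they are skew in the
two indices, and each `L I` has orthonormal rows. The matrices may be rectangular, since the row and
column indices of `L I` (bosons and fermions) need not be identified. -/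
structure IsSkewOrthonormal {ι m n R : Type*} [Fintype m] [Fintype n] [DecidableEq m] [CommRing R]
    (L : ι → Matrix m n R) : Prop where
  mul_transpose_self (I : ι) : L I * (L I)ᵀ = 1
  transpose_mul_eq_neg {I J : ι} (hIJ : I ≠ J) : (L I)ᵀ * L J = -((L J)ᵀ * L I)

namespace IsSkewOrthonormal

variable {ι m n R : Type*} [Fintype m] [Fintype n] [DecidableEq m] [CommRing R]
  {L : ι → Matrix m n R} {I J K M : ι}

theorem transpose_mul_mul_transpose_mul (hL : IsSkewOrthonormal L) (I J K : ι) :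
    (L I)ᵀ * L J * ((L J)ᵀ * L K) = (L I)ᵀ * L K := by
  rw [Matrix.mul_assoc, ← Matrix.mul_assoc (L J), hL.mul_transpose_self, Matrix.one_mul]

variable [IsAddTorsionFree R]

theorem trace_transpose_mul (hL : IsSkewOrthonormal L) (hIJ : I ≠ J) :
    trace ((L I)ᵀ * L J) = 0 :=
  trace_eq_zero_of_transpose_eq_neg <| by
    rw [transpose_mul, transpose_transpose, hL.transpose_mul_eq_neg hIJ.symm]

theorem trace_mul_eq_zero_of_ne (hL : IsSkewOrthonormal L) (hIK : I ≠ K) :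
    trace ((L I)ᵀ * L J * ((L J)ᵀ * L K)) = 0 := by
  rw [hL.transpose_mul_mul_transpose_mul, hL.trace_transpose_mul hIK]

theorem trace_mul_eq_zero_of_card_inter_eq_one [DecidableEq ι] (hL : IsSkewOrthonormal L)
    (hIJ : I ≠ J) (hKM : K ≠ M) (h : (({I, J} : Finset ι) ∩ {K, M}).card = 1) :
    trace ((L I)ᵀ * L J * ((L K)ᵀ * L M)) = 0 := by
  have hpairs : ({I, J} : Finset ι) ≠ {K, M} := by
    intro heq
    rw [heq, Finset.inter_self, Finset.card_pair hKM] at h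
    exact absurd h (by decide)
  obtain ⟨a, ha⟩ := Finset.card_pos.mp (h.symm ▸ Nat.one_pos)
  simp only [Finset.mem_inter, Finset.mem_insert, Finset.mem_singleton] at ha
  obtain ⟨rfl | rfl, rfl | rfl⟩ := ha
  · have hJM : J ≠ M := by rintro rfl; exact hpairs rfl
    rw [hL.transpose_mul_eq_neg hIJ, Matrix.neg_mul, trace_neg, hL.trace_mul_eq_zero_of_ne hJM,
      neg_zero]
  · have hJK : J ≠ K := by rintro rfl; exact hpairs (Finset.pair_comm _ _)
    rw [trace_mul_comm, hL.trace_mul_eq_zero_of_ne hJK.symm]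
  · have hIM : I ≠ M := by rintro rfl; exact hpairs (Finset.pair_comm _ _)
    exact hL.trace_mul_eq_zero_of_ne hIM
  · have hIK : I ≠ K := by rintro rfl; exact hpairs rfl
    rw [hL.transpose_mul_eq_neg hKM, Matrix.mul_neg, trace_neg, hL.trace_mul_eq_zero_of_ne hIK,
      neg_zero]

end IsSkewOrthonormal

theorem GardenRel.isSkewOrthonormal {d N : ℕ} {L : Fin N → Matrix (Fin d) (Fin d) ℤ}
    (h : GardenRel L) : IsSkewOrthonormal L where
  mul_transpose_self I := by
    have hII := (h I I).1
    rw [if_pos rfl, ← two_zsmul] at hII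
    exact smul_right_injective _ (two_ne_zero (α := ℤ)) hII
  transpose_mul_eq_neg {I J} hIJ := eq_neg_of_add_eq_zero_left ((h I J).2.trans (if_neg hIJ))

theorem stmt16_general {m n R : Type*} [Fintype m] [Fintype n] [DecidableEq m] [DecidableEq n]
    [CommRing R] [IsAddTorsionFree R] {L : Fin 4 → Matrix m n R} (hL : IsSkewOrthonormal L)
    {X : Matrix n n R}
    (hX : X = ∑ I : Fin 4, ∑ J : Fin 4, if I < J then (L I)ᵀ * L J else 0) :
    trace (X * X) =
      trace (((L 0)ᵀ * L 1 + (L 2)ᵀ * L 3) ^ 2) +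
      trace (((L 0)ᵀ * L 2 + (L 1)ᵀ * L 3) ^ 2) +
      trace (((L 0)ᵀ * L 3 + (L 1)ᵀ * L 2) ^ 2) := by
  have hX_matchings : X = ((L 0)ᵀ * L 1 + (L 2)ᵀ * L 3) + ((L 0)ᵀ * L 2 + (L 1)ᵀ * L 3) +
      ((L 0)ᵀ * L 3 + (L 1)ᵀ * L 2) := by
    simp +decide only [hX, Fin.sum_univ_four, if_true, if_false, zero_add, add_zero]
    abel
  rw [hX_matchings, sq, sq, sq]
  refine trace_add_add_mul_self_of_trace_mul_eq_zero ?_ ?_ ?_ <;>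
    simp (disch := decide) only [Matrix.add_mul, Matrix.mul_add, trace_add,
      hL.trace_mul_eq_zero_of_card_inter_eq_one, add_zero]

theorem stmt16 (L : Fin 4 → Matrix (Fin 4) (Fin 4) ℤ) (hL : IsAdinkra L)
    (X : Matrix (Fin 4) (Fin 4) ℤ)
    (hX : X = ∑ I : Fin 4, ∑ J : Fin 4, if I < J then (L I)ᵀ * L J else 0) :
    Matrix.trace (X * X) =
      Matrix.trace (((L 0)ᵀ * L 1 + (L 2)ᵀ * L 3) ^ 2) +
      Matrix.trace (((L 0)ᵀ * L 2 + (L 1)ᵀ * L 3) ^ 2) +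
      Matrix.trace (((L 0)ᵀ * L 3 + (L 1)ᵀ * L 2) ^ 2) :=
  stmt16_general hL.2.isSkewOrthonormal hX
end

section
/- Let A = (L_1,L_2,L_3,L_4) encode a (4,1) valise adinkra with chirality χ. Then the symmetrized self-gadget satisfies SG(A,A) = −24 − 8·χ; in particular SG(A,A) = −32 if χ = 1 and SG(A,A) = −16 if χ = −1, so the value SG(A,A) determines the chirality of A. -/
open Matrix

/-- The symmetrized gadget `SG(A,A') = Σ trace(L_{I₁}ᵀ·L_{J₁}·L'_{I₂}ᵀ·L'_{J₂})`,
summed over all pairs `I₁ < J₁` and `I₂ < J₂` in `{1,2,3,4}`. -/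
def SG (L L' : Fin 4 → Matrix (Fin 4) (Fin 4) ℤ) : ℤ :=
  ∑ I₁ : Fin 4, ∑ J₁ : Fin 4, ∑ I₂ : Fin 4, ∑ J₂ : Fin 4,
    if I₁ < J₁ ∧ I₂ < J₂ then
      Matrix.trace ((L I₁)ᵀ * L J₁ * (L' I₂)ᵀ * L' J₂)
    else 0

/-!
The products `L_Iᵀ L_J`, `I < J`, square to `-1`. Two of them anticommute when they share exactly
one index and commute when their index pairs are disjoint. Hence in the square of their sum `Q` only
the six squares and the three products of complementary pairs (each occurring twice) survive. The
latter are `ω`, `-ω`, `ω` with `ω = L₀ᵀ L₁ L₂ᵀ L₃`, so `Q² = 2ω - 6`, and the self-gadget is the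
trace of `Q²`. The relations are those of three anticommuting complex structures `a = L₀ᵀ L₁`,
`b = L₀ᵀ L₂`, `c = L₀ᵀ L₃`, in terms of which `Q = (a + b + c) - (ab + ac + bc)` and `ω = -abc`.
-/

section HoloraumySum

variable {ι κ l m n R : Type*} [Fintype ι] [LinearOrder ι] [Fintype κ] [LinearOrder κ]
  [Fintype l] [Fintype m] [Fintype n] [NonUnitalSemiring R]

/-- The sum over `I < J` of the products `L_Iᵀ L_J`, which for a garden algebra are the fermionic
holoraumy matrices up to normalization. The symmetrized gadget is the trace pairing of two such
sums. -/
def holoraumySum (L : ι → Matrix m n R) : Matrix n n R :=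
  ∑ I, ∑ J, if I < J then (L I)ᵀ * L J else 0

/-- The symmetrized gadget of two families of matrices of any size; `SG` is the case of quadruples
of `4 × 4` integer matrices. The row types `l` and `m` may differ because only the products
`L_Iᵀ L_J` enter. -/
def symmetrizedGadget (L : ι → Matrix l n R) (L' : κ → Matrix m n R) : R :=
  ∑ I₁, ∑ J₁, ∑ I₂, ∑ J₂,
    if I₁ < J₁ ∧ I₂ < J₂ then trace ((L I₁)ᵀ * L J₁ * (L' I₂)ᵀ * L' J₂) else 0

lemma symmetrizedGadget_eq_trace_mul (L : ι → Matrix l n R) (L' : κ → Matrix m n R) :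
    symmetrizedGadget L L' = trace (holoraumySum L * holoraumySum L') := by
  simp_rw [holoraumySum, Finset.sum_mul, Finset.mul_sum, ite_zero_mul_ite_zero, trace_sum,
    apply_ite trace, trace_zero, ← Matrix.mul_assoc]
  rfl

end HoloraumySum

section Anticommuting

variable {A : Type*} [Ring A] {a b c : A}

lemma add_add_mul_self_of_anticommute (hab : a * b + b * a = 0) (hac : a * c + c * a = 0)
    (hbc : b * c + c * b = 0) :
    (a + b + c) * (a + b + c) = a * a + b * b + c * c := by
  linear_combination (norm := noncomm_ring) hab + hac + hbc

lemma mul_mul_mul_self_of_anticommute (hab : a * b + b * a = 0) :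
    a * b * (a * b) = -(a * a * (b * b)) := by
  linear_combination (norm := noncomm_ring) a * hab * b

lemma sum_products_mul_self_of_anticommute (hab : a * b + b * a = 0)
    (hac : a * c + c * a = 0) (hbc : b * c + c * b = 0) :
    (a * b + a * c + b * c) * (a * b + a * c + b * c) =
      -(a * a * (b * b) + a * a * (c * c) + b * b * (c * c)) := by
  have hab_ac : a * b * (a * c) + a * c * (a * b) = 0 := by
    linear_combination (norm := noncomm_ring) a * hab * c + a * hac * b - a * a * hbc
  have hab_bc : a * b * (b * c) + b * c * (a * b) = 0 := by
    linear_combination (norm := noncomm_ring) b * hac * b - hab * c * b + a * b * hbc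
  have hac_bc : a * c * (b * c) + b * c * (a * c) = 0 := by
    linear_combination (norm := noncomm_ring) a * hbc * c + b * hac * c - hab * c * c
  rw [add_add_mul_self_of_anticommute hab_ac hab_bc hac_bc, mul_mul_mul_self_of_anticommute hab,
    mul_mul_mul_self_of_anticommute hac, mul_mul_mul_self_of_anticommute hbc]
  abel

lemma add_add_mul_sum_products_add_swap_of_anticommute (hab : a * b + b * a = 0)
    (hac : a * c + c * a = 0) (hbc : b * c + c * b = 0) :
    (a + b + c) * (a * b + a * c + b * c) + (a * b + a * c + b * c) * (a + b + c) =
      2 * (a * b * c) := by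
  linear_combination (norm := noncomm_ring)
    a * hab + hab * b + a * hac + b * hac + hac * b + hac * c + b * hbc + hbc * c

lemma add_add_sub_sum_products_mul_self_of_anticommute (hab : a * b + b * a = 0)
    (hac : a * c + c * a = 0) (hbc : b * c + c * b = 0)
    (ha : a * a = -1) (hb : b * b = -1) (hc : c * c = -1) :
    (a + b + c - (a * b + a * c + b * c)) * (a + b + c - (a * b + a * c + b * c)) =
      -(2 * (a * b * c)) - 6 := by
  have hsum : (a + b + c) * (a + b + c) = -3 := by
    rw [add_add_mul_self_of_anticommute hab hac hbc, ha, hb, hc]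
    norm_num
  have hprod : (a * b + a * c + b * c) * (a * b + a * c + b * c) = -3 := by
    rw [sum_products_mul_self_of_anticommute hab hac hbc, ha, hb, hc]
    norm_num
  calc
    _ = (a + b + c) * (a + b + c) + (a * b + a * c + b * c) * (a * b + a * c + b * c) -
        ((a + b + c) * (a * b + a * c + b * c) + (a * b + a * c + b * c) * (a + b + c)) := by
      noncomm_ring
    _ = -3 + -3 - 2 * (a * b * c) := by
      rw [hsum, hprod, add_add_mul_sum_products_add_swap_of_anticommute hab hac hbc]
    _ = -(2 * (a * b * c)) - 6 := by
      rw [sub_eq_neg_add, sub_eq_add_neg]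
      norm_num

end Anticommuting

namespace GardenRel

section Relations

variable {d N : ℕ} {L : Fin N → Matrix (Fin d) (Fin d) ℤ} {I J K : Fin N}

lemma transpose_mul_self (h : GardenRel L) (I : Fin N) : (L I)ᵀ * L I = 1 := by
  have htwo := (h I I).2
  rw [if_pos rfl, ← two_smul ℤ] at htwo
  exact smul_right_injective _ two_ne_zero htwo

lemma mul_transpose_self (h : GardenRel L) (I : Fin N) : L I * (L I)ᵀ = 1 :=
  mul_eq_one_comm.mp (h.transpose_mul_self I)

lemma transpose_mul_add_transpose_mul (h : GardenRel L) (hIJ : I ≠ J) :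
    (L I)ᵀ * L J + (L J)ᵀ * L I = 0 := by
  simpa only [if_neg hIJ] using (h I J).2

lemma transpose_mul_mul_transpose_mul (h : GardenRel L) (hKI : K ≠ I) (J : Fin N) :
    (L K)ᵀ * L I * ((L K)ᵀ * L J) = -((L I)ᵀ * L J) := by
  rw [eq_neg_of_add_eq_zero_left (h.transpose_mul_add_transpose_mul hKI), neg_mul,
    Matrix.mul_assoc, ← Matrix.mul_assoc (L K), h.mul_transpose_self, Matrix.one_mul]

lemma transpose_mul_mul_self (h : GardenRel L) (hKI : K ≠ I) :
    (L K)ᵀ * L I * ((L K)ᵀ * L I) = -1 := by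
  rw [h.transpose_mul_mul_transpose_mul hKI, h.transpose_mul_self]

lemma transpose_mul_anticommute (h : GardenRel L) (hKI : K ≠ I) (hKJ : K ≠ J) (hIJ : I ≠ J) :
    (L K)ᵀ * L I * ((L K)ᵀ * L J) + (L K)ᵀ * L J * ((L K)ᵀ * L I) = 0 := by
  rw [h.transpose_mul_mul_transpose_mul hKI, h.transpose_mul_mul_transpose_mul hKJ, ← neg_add,
    h.transpose_mul_add_transpose_mul hIJ, neg_zero]

end Relations

variable {d : ℕ} {L : Fin 4 → Matrix (Fin d) (Fin d) ℤ}

lemma holoraumySum_eq (h : GardenRel L) :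
    holoraumySum L =
      (L 0)ᵀ * L 1 + (L 0)ᵀ * L 2 + (L 0)ᵀ * L 3 -
        ((L 0)ᵀ * L 1 * ((L 0)ᵀ * L 2) + (L 0)ᵀ * L 1 * ((L 0)ᵀ * L 3) +
          (L 0)ᵀ * L 2 * ((L 0)ᵀ * L 3)) := by
  rw [h.transpose_mul_mul_transpose_mul (by decide), h.transpose_mul_mul_transpose_mul (by decide),
    h.transpose_mul_mul_transpose_mul (by decide)]
  simp only [holoraumySum, Fin.sum_univ_four, Fin.isValue, Fin.reduceLT, not_lt_zero,
    lt_self_iff_false, ↓reduceIte, zero_add, add_zero]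
  abel

lemma holoraumySum_mul_self (h : GardenRel L) :
    holoraumySum L * holoraumySum L =
      (2 : ℤ) • ((L 0)ᵀ * L 1 * (L 2)ᵀ * L 3) - (6 : ℤ) • 1 := by
  have hchir : (L 0)ᵀ * L 1 * (L 2)ᵀ * L 3 =
      -((L 0)ᵀ * L 1 * ((L 0)ᵀ * L 2) * ((L 0)ᵀ * L 3)) := by
    rw [Matrix.mul_assoc ((L 0)ᵀ * L 1) ((L 0)ᵀ * L 2),
      h.transpose_mul_mul_transpose_mul (by decide), mul_neg, neg_neg, Matrix.mul_assoc _ _ (L 3)]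
  rw [h.holoraumySum_eq, add_add_sub_sum_products_mul_self_of_anticommute
    (h.transpose_mul_anticommute (by decide) (by decide) (by decide))
    (h.transpose_mul_anticommute (by decide) (by decide) (by decide))
    (h.transpose_mul_anticommute (by decide) (by decide) (by decide))
    (h.transpose_mul_mul_self (by decide)) (h.transpose_mul_mul_self (by decide))
    (h.transpose_mul_mul_self (by decide)), hchir]
  simp only [zsmul_eq_mul, Int.cast_ofNat, mul_neg, mul_one]

end GardenRel

theorem stmt17_general {d : ℕ} {L : Fin 4 → Matrix (Fin d) (Fin d) ℤ} (h : GardenRel L) :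
    symmetrizedGadget L L = 2 * trace ((L 0)ᵀ * L 1 * (L 2)ᵀ * L 3) - 6 * d := by
  rw [symmetrizedGadget_eq_trace_mul, h.holoraumySum_mul_self, trace_sub, trace_smul,
    trace_smul, trace_one, Fintype.card_fin, smul_eq_mul, smul_eq_mul]

theorem stmt17 (L : Fin 4 → Matrix (Fin 4) (Fin 4) ℤ) (hL : IsAdinkra L)
    (χ : ℤ) (hχ : χ = 1 ∨ χ = -1)
    (hchir : (L 0)ᵀ * L 1 * (L 2)ᵀ * L 3 = -(χ • (1 : Matrix (Fin 4) (Fin 4) ℤ))) :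
    SG L L = -24 - 8 * χ := by
  rw [show SG L L = symmetrizedGadget L L from rfl, stmt17_general hL.2, hchir, trace_neg,
    trace_smul, trace_one, Fintype.card_fin, smul_eq_mul]
  ring
end

section
/- Let S be the set of all quadruples (L_1,L_2,L_3,L_4) of 4×4 integer signed permutation matrices satisfying the garden algebra relations. Then among the ordered pairs (A,A') ∈ S × S: exactly 14155776 pairs satisfy SG(A,A') = 32; exactly 14155776 pairs satisfy SG(A,A') = −32; exactly 198180864 pairs satisfy SG(A,A') = 16; exactly 198180864 pairs satisfy SG(A,A') = −16; and exactly 934281216 pairs satisfy SG(A,A') = 0. -/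
open Matrix

/-- The set of (4,1) valise adinkras, encoded by their L-matrices. -/
def Adinkra41 : Type :=
  {L : Fin 4 → Matrix (Fin 4) (Fin 4) ℤ // IsAdinkra L}

/-!
A garden algebra family stays one when all its matrices are multiplied from the left by a fixed
integral orthogonal matrix `P`, and this does not change `H = ∑ I < J, L_Iᵀ L_J`; so one may take
`L₁ = 1`. The other three matrices then form a Clifford system, and skew-symmetric integral
orthogonal `4 × 4` matrices are left or right multiplications by imaginary unit quaternions. Left
and right multiplications commute while the three matrices anticommute, so all three are of the
same kind `χ`, and their coordinate vectors are the rows of some `A ∈ O(3, ℤ)`. Hence adinkras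
correspond to triples `(P, χ, A)`.

By the product rule for quaternions, `H` is again a quaternion multiplication, by `2 A₂` or
`2 (A₁ + A₃)` according to the sign of `det A`. The symmetrized gadget `trace (H H')` vanishes for
opposite `χ`, and is otherwise `-4` times the inner product of two such vectors, so it depends only
on `det A'` and the relative matrix `A A'ᵀ`. This leaves 384 cases, which are enumerated.
-/

section SignedPermMatrix

variable {n : Type*} [DecidableEq n]

/-- The signed permutation matrix whose `i`-th row has its nonzero entry `p.2 i` in column
`p.1 i`. -/
def signedPermMatrix (p : Equiv.Perm n × (n → ℤˣ)) : Matrix n n ℤ :=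
  Matrix.of fun i => Pi.single (p.1 i) (p.2 i : ℤ)

theorem signedPermMatrix_injective :
    Function.Injective (signedPermMatrix : _ → Matrix n n ℤ) := by
  rintro ⟨σ, ε⟩ ⟨τ, δ⟩ h
  have hrow (i : n) : σ i = τ i ∧ ε i = δ i := by
    have hi : (Pi.single (σ i) (ε i : ℤ) : n → ℤ) = Pi.single (τ i) (δ i : ℤ) := congrFun h i
    have hval := congrFun hi (σ i)
    by_cases hστ : σ i = τ i
    · exact ⟨hστ, Units.ext (by simpa [hστ] using hval)⟩
    · simp [hστ] at hval
  exact Prod.ext (Equiv.ext fun i => (hrow i).1) (funext fun i => (hrow i).2)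

variable [Fintype n]

theorem signedPermMatrix_mem_orthogonalGroup (p : Equiv.Perm n × (n → ℤˣ)) :
    signedPermMatrix p ∈ orthogonalGroup n ℤ := by
  rw [mem_orthogonalGroup_iff]
  ext i j
  change Pi.single (p.1 i) (p.2 i : ℤ) ⬝ᵥ Pi.single (p.1 j) (p.2 j : ℤ) = _
  obtain rfl | h := eq_or_ne i j
  · simp
  · simp [h]

theorem exists_eq_single_of_dotProduct_self_eq_one {v : n → ℤ} (hv : v ⬝ᵥ v = 1) :
    ∃ i, ∃ s : ℤˣ, v = Pi.single i (s : ℤ) := by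
  obtain ⟨i, -, hi⟩ := Finset.exists_ne_zero_of_sum_ne_zero (hv.trans_ne one_ne_zero)
  have hi_pos : 0 < v i * v i := (mul_self_nonneg _).lt_of_ne' hi
  have hsum : v i * v i + ∑ j ∈ Finset.univ.erase i, v j * v j = 1 :=
    (Finset.add_sum_erase _ _ (Finset.mem_univ i)).trans hv
  have hrest_nonneg : ∀ j ∈ Finset.univ.erase i, 0 ≤ v j * v j := fun _ _ => mul_self_nonneg _
  have hrest : ∑ j ∈ Finset.univ.erase i, v j * v j = 0 := by
    linarith [Finset.sum_nonneg hrest_nonneg]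
  have hunit : v i * v i = 1 := by linarith
  refine ⟨i, Units.mk _ _ hunit hunit, funext fun j => ?_⟩
  obtain rfl | hj := eq_or_ne j i
  · simp
  · rw [Pi.single_eq_of_ne hj]
    exact mul_self_eq_zero.mp ((Finset.sum_eq_zero_iff_of_nonneg hrest_nonneg).mp hrest j
      (Finset.mem_erase.mpr ⟨hj, Finset.mem_univ j⟩))

theorem exists_signedPermMatrix_eq {A : Matrix n n ℤ} (hA : A ∈ orthogonalGroup n ℤ) :
    ∃ p, signedPermMatrix p = A := by
  have hdot (i j : n) : A i ⬝ᵥ A j = (1 : Matrix n n ℤ) i j :=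
    congrFun (congrFun ((mem_orthogonalGroup_iff n ℤ).mp hA) i) j
  choose σ ε hrow using fun i =>
    exists_eq_single_of_dotProduct_self_eq_one ((hdot i i).trans (one_apply_eq i))
  have hσ : Function.Injective σ := by
    intro i j hij
    by_contra hne
    have h := hdot i j
    simp [hrow, hij, one_apply_ne hne] at h
  exact ⟨(Equiv.ofBijective σ hσ.bijective_of_finite, ε), funext fun i => (hrow i).symm⟩

/-- Integral orthogonal matrices are the same as signed permutation matrices. -/
noncomputable def signedPermEquiv : Equiv.Perm n × (n → ℤˣ) ≃ orthogonalGroup n ℤ :=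
  Equiv.ofBijective (fun p => ⟨signedPermMatrix p, signedPermMatrix_mem_orthogonalGroup p⟩)
    ⟨fun _ _ h => signedPermMatrix_injective (congrArg Subtype.val h),
      fun A => (exists_signedPermMatrix_eq A.2).imp fun _ => Subtype.ext⟩

noncomputable instance : Fintype (orthogonalGroup n ℤ) :=
  Fintype.ofEquiv _ signedPermEquiv

theorem card_orthogonalGroup_int :
    Fintype.card (orthogonalGroup n ℤ) =
      (Fintype.card n).factorial * 2 ^ Fintype.card n := by
  rw [← Fintype.card_congr signedPermEquiv]
  simp [Fintype.card_perm]

theorem isSignedPerm_of_mem_orthogonalGroup {d : ℕ} {A : Matrix (Fin d) (Fin d) ℤ}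
    (hA : A ∈ orthogonalGroup (Fin d) ℤ) : IsSignedPerm A := by
  obtain ⟨⟨σ, ε⟩, rfl⟩ := exists_signedPermMatrix_eq hA
  have hne (i j : Fin d) : signedPermMatrix (σ, ε) i j ≠ 0 ↔ j = σ i := by
    simp [signedPermMatrix, Pi.single_apply]
  refine ⟨fun i j => ?_, fun i => ?_, fun j => ?_⟩
  · by_cases hj : j = σ i
    · right
      simpa [signedPermMatrix, hj] using Int.isUnit_iff.mp (ε i).isUnit
    · exact Or.inl (of_not_not (mt (hne i j).mp hj))
  · simp [hne]
  · exact ⟨σ.symm j, by simp [hne], fun i hi => by simp [(hne i j).mp hi]⟩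

theorem det_of_mem_orthogonalGroup_int {A : Matrix n n ℤ} (hA : A ∈ orthogonalGroup n ℤ) :
    A.det = 1 ∨ A.det = -1 := by
  rw [← Int.isUnit_iff]
  exact UnitaryGroup.det_isUnit ⟨A, hA⟩

/-- Negation reverses the determinant in odd dimension, so both signs are equidistributed. -/
theorem two_mul_sum_comp_det_orthogonalGroup_int (hn : Odd (Fintype.card n)) (F : ℤ → ℕ) :
    2 * ∑ A : orthogonalGroup n ℤ, F A.1.det =
      Fintype.card (orthogonalGroup n ℤ) * ∑ δ : ℤˣ, F δ := by
  have hneg : ∑ A : orthogonalGroup n ℤ, F (-A.1.det) = ∑ A : orthogonalGroup n ℤ, F A.1.det := by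
    have hdet (A : orthogonalGroup n ℤ) : (-A).1.det = -A.1.det := by
      rw [Unitary.coe_neg, det_neg, hn.neg_one_pow, neg_one_mul]
    simpa only [Equiv.neg_apply, hdet] using
      Equiv.sum_comp (Equiv.neg _) fun A : orthogonalGroup n ℤ => F A.1.det
  have hpair (A : orthogonalGroup n ℤ) : F A.1.det + F (-A.1.det) = ∑ δ : ℤˣ, F δ := by
    have huniv : (Finset.univ : Finset ℤˣ) = {1, -1} := rfl
    obtain h | h := det_of_mem_orthogonalGroup_int A.2 <;> simp [h, huniv, add_comm]
  rw [two_mul]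
  nth_rw 2 [← hneg]
  simp [← Finset.sum_add_distrib, hpair]

end SignedPermMatrix

section GardenRel

variable {d N : ℕ} {L : Fin N → Matrix (Fin d) (Fin d) ℤ} {P : Matrix (Fin d) (Fin d) ℤ}

theorem GardenRel.mem_orthogonalGroup (hL : GardenRel L) (I : Fin N) :
    L I ∈ orthogonalGroup (Fin d) ℤ := by
  have h := (hL I I).1
  rw [if_pos rfl, ← two_smul ℤ] at h
  exact (mem_orthogonalGroup_iff _ ℤ).mpr (smul_right_injective _ two_ne_zero h)

theorem isAdinkra_iff_gardenRel {L : Fin 4 → Matrix (Fin 4) (Fin 4) ℤ} :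
    IsAdinkra L ↔ GardenRel L :=
  ⟨And.right, fun h => ⟨fun I => isSignedPerm_of_mem_orthogonalGroup (h.mem_orthogonalGroup I), h⟩⟩

theorem transpose_mul_mul_of_mem_orthogonalGroup {n R : Type*} [Fintype n] [DecidableEq n]
    [CommRing R] {P : Matrix n n R} (hP : P ∈ orthogonalGroup n R) (A B : Matrix n n R) :
    (P * A)ᵀ * (P * B) = Aᵀ * B := by
  rw [transpose_mul, Matrix.mul_assoc, ← Matrix.mul_assoc Pᵀ,
    (mem_orthogonalGroup_iff' n R).mp hP, Matrix.one_mul]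

theorem GardenRel.mul_left (hL : GardenRel L) (hP : P ∈ orthogonalGroup (Fin d) ℤ) :
    GardenRel fun I => P * L I := by
  refine fun I J => ⟨?_, ?_⟩
  · have h : P * L I * (P * L J)ᵀ + P * L J * (P * L I)ᵀ =
        P * (L I * (L J)ᵀ + L J * (L I)ᵀ) * Pᵀ := by
      simp only [transpose_mul, Matrix.mul_add, Matrix.add_mul, Matrix.mul_assoc]
    rw [h, (hL I J).1]
    split_ifs
    · rw [mul_smul_comm, Matrix.mul_one, smul_mul_assoc, (mem_orthogonalGroup_iff _ ℤ).mp hP]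
    · rw [Matrix.mul_zero, Matrix.zero_mul]
  · simpa only [transpose_mul_mul_of_mem_orthogonalGroup hP] using (hL I J).2

/-- A family of real Clifford generators: anticommuting skew-symmetric matrices of square `-1`.
These are the garden algebra families starting with the identity matrix. -/
def IsCliffordSystem {ι : Type*} [DecidableEq ι] {d : ℕ}
    (Y : ι → Matrix (Fin d) (Fin d) ℤ) : Prop :=
  (∀ i, (Y i)ᵀ = -Y i) ∧ ∀ i j, Y i * Y j + Y j * Y i = if i = j then (-2 : ℤ) • 1 else 0

theorem gardenRel_vecCons_one_iff {Y : Fin N → Matrix (Fin d) (Fin d) ℤ} :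
    GardenRel (vecCons 1 Y) ↔ IsCliffordSystem Y := by
  constructor
  · intro h
    have hskew (i : Fin N) : (Y i)ᵀ = -Y i := by
      have h0 := (h 0 i.succ).1
      rw [if_neg (Fin.succ_ne_zero i).symm] at h0
      exact eq_neg_of_add_eq_zero_left (by simpa using h0)
    refine ⟨hskew, fun i j => ?_⟩
    have hij := congrArg Neg.neg (h i.succ j.succ).1
    rw [← neg_zero, neg_smul, ← apply_ite]
    simpa [hskew, -zsmul_eq_mul, add_comm] using hij
  · rintro ⟨hskew, hanti⟩ I J
    have hneg (i j : Fin N) : -(Y i * Y j) + -(Y j * Y i) = if i = j then (2 : ℤ) • 1 else 0 := by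
      rw [← neg_add, hanti]
      split_ifs <;> simp
    cases I using Fin.cases <;> cases J using Fin.cases
    · simp [two_smul]
    · simp [hskew, (Fin.succ_ne_zero _).symm]
    · simp [hskew]
    · simp only [cons_val_succ, hskew, Matrix.mul_neg, Matrix.neg_mul, Fin.succ_inj, hneg, and_self]

end GardenRel

section HalfGadget

variable {m R : Type*} [Fintype m] [CommRing R] {N : ℕ}

/-- The sum `Σ L_Iᵀ L_J` over `I < J`, of which the symmetrized gadget is the trace form. -/
def halfGadget (L : Fin N → Matrix m m R) : Matrix m m R :=
  ∑ I, ∑ J, if I < J then (L I)ᵀ * L J else 0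

theorem SG_eq_trace (L L' : Fin 4 → Matrix (Fin 4) (Fin 4) ℤ) :
    SG L L' = trace (halfGadget L * halfGadget L') := by
  simp only [SG, halfGadget, Finset.sum_mul]
  simp only [Finset.mul_sum, trace_sum]
  refine Finset.sum_congr rfl fun I₁ _ => Finset.sum_congr rfl fun J₁ _ =>
    Finset.sum_congr rfl fun I₂ _ => Finset.sum_congr rfl fun J₂ _ => ?_
  by_cases h₁ : I₁ < J₁ <;> by_cases h₂ : I₂ < J₂ <;> simp [h₁, h₂, Matrix.mul_assoc]

theorem halfGadget_mul_left [DecidableEq m] {P : Matrix m m R} (hP : P ∈ orthogonalGroup m R)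
    (L : Fin N → Matrix m m R) : halfGadget (fun I => P * L I) = halfGadget L := by
  simp only [halfGadget, transpose_mul_mul_of_mem_orthogonalGroup hP]

theorem halfGadget_vecCons_one [DecidableEq m] (Y : Fin N → Matrix m m R) :
    halfGadget (vecCons 1 Y) = ∑ i, Y i + halfGadget Y := by
  simp [halfGadget, Fin.sum_univ_succ]

end HalfGadget

section QuaternionMatrix

variable {R : Type*} [CommRing R]

/-- Multiplication by the imaginary quaternion `χ v` on `R⁴`, from the left if `χ = 1` and from the
right if `χ = -1`. Scaling `v` by the chirality `χ` makes the product rule `quaternionMatrix_mul`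
the same on both sides. -/
def quaternionMatrix (χ : R) : (Fin 3 → R) →ₗ[R] Matrix (Fin 4) (Fin 4) R where
  toFun v :=
    !![0, -χ * v 0, -χ * v 1, -χ * v 2;
      χ * v 0, 0, -v 2, v 1;
      χ * v 1, v 2, 0, -v 0;
      χ * v 2, -v 1, v 0, 0]
  map_add' v w := by
    ext i j
    fin_cases i <;> fin_cases j <;> simp <;> ring
  map_smul' c v := by
    ext i j
    fin_cases i <;> fin_cases j <;> simp <;> ring

theorem transpose_quaternionMatrix (χ : R) (v : Fin 3 → R) :
    (quaternionMatrix χ v)ᵀ = -quaternionMatrix χ v := by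
  ext i j
  fin_cases i <;> fin_cases j <;> simp [quaternionMatrix]

theorem quaternionMatrix_mul {χ : R} (hχ : χ * χ = 1) (v w : Fin 3 → R) :
    quaternionMatrix χ v * quaternionMatrix χ w =
      quaternionMatrix χ (v ⨯₃ w) - (v ⬝ᵥ w) • 1 := by
  ext i j
  fin_cases i <;> fin_cases j <;>
    simp [quaternionMatrix, Matrix.mul_apply, Fin.sum_univ_four, cross_apply, dotProduct,
      Fin.sum_univ_three] <;>
    grind

theorem quaternionMatrix_neg_commute {χ : R} (hχ : χ * χ = 1) (v w : Fin 3 → R) :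
    quaternionMatrix χ v * quaternionMatrix (-χ) w =
      quaternionMatrix (-χ) w * quaternionMatrix χ v := by
  ext i j
  fin_cases i <;> fin_cases j <;>
    simp [quaternionMatrix, Matrix.mul_apply, Fin.sum_univ_four] <;>
    grind

theorem trace_quaternionMatrix_mul (χ χ' : R) (v w : Fin 3 → R) :
    trace (quaternionMatrix χ v * quaternionMatrix χ' w) = -2 * (1 + χ * χ') * (v ⬝ᵥ w) := by
  simp only [trace, diag_apply, Matrix.mul_apply, dotProduct, Fin.sum_univ_four,
    Fin.sum_univ_three, quaternionMatrix, LinearMap.coe_mk, AddHom.coe_mk, of_apply, cons_val',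
    cons_val_zero, cons_val_one, cons_val, cons_val_fin_one]
  ring

theorem quaternionMatrix_mul_add_mul {χ : R} (hχ : χ * χ = 1) (v w : Fin 3 → R) :
    quaternionMatrix χ v * quaternionMatrix χ w + quaternionMatrix χ w * quaternionMatrix χ v =
      (-2 * (v ⬝ᵥ w)) • 1 := by
  rw [quaternionMatrix_mul hχ, quaternionMatrix_mul hχ, ← cross_anticomm, map_neg,
    dotProduct_comm w v]
  module

theorem cross_row_of_mem_orthogonalGroup {A : Matrix (Fin 3) (Fin 3) R}
    (hA : A ∈ orthogonalGroup (Fin 3) R) (i : Fin 3) :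
    A i ⨯₃ A (i + 1) = A.det • A (i + 2) := by
  have hadj : A.adjugate = A.det • Aᵀ := by
    rw [← Matrix.mul_one A.adjugate, ← (mem_orthogonalGroup_iff _ R).mp hA, ← Matrix.mul_assoc,
      adjugate_mul, smul_mul_assoc, Matrix.one_mul]
  ext k
  have hk := congrFun (congrFun hadj k) (i + 2)
  rw [adjugate_fin_three] at hk
  fin_cases i <;> fin_cases k <;> simp [cross_apply] at hk ⊢ <;> linear_combination hk

end QuaternionMatrix

section Clifford

theorem quaternionMatrix_injective {χ χ' : ℤˣ} {v v' : Fin 3 → ℤ} (hv : v ≠ 0)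
    (h : quaternionMatrix (χ : ℤ) v = quaternionMatrix (χ' : ℤ) v') : χ = χ' ∧ v = v' := by
  have hentry (i j : Fin 4) := congrFun (congrFun h i) j
  obtain rfl : v = v' := by
    ext k
    fin_cases k
    · exact hentry 3 2
    · exact hentry 1 3
    · exact hentry 2 1
  obtain ⟨k, hk⟩ := Function.ne_iff.mp hv
  have hχ : (χ : ℤ) * v k = χ' * v k := by
    fin_cases k
    · exact hentry 1 0
    · exact hentry 2 0
    · exact hentry 3 0
  exact ⟨Units.ext (mul_right_cancel₀ hk hχ), rfl⟩

theorem exists_units_smul_eq_of_mul_self_eq {n : Type*} [Fintype n] {v w : n → ℤ}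
    (hw : w ⬝ᵥ w = 1) (h : ∀ i, w i * w i = v i * v i) : ∃ s : ℤˣ, (s : ℤ) • v = w := by
  classical
  obtain ⟨i, t, rfl⟩ := exists_eq_single_of_dotProduct_self_eq_one hw
  have hvi : v i * v i = 1 := by simpa using (h i).symm
  refine ⟨t * Units.mk _ _ hvi hvi, funext fun j => ?_⟩
  obtain rfl | hj := eq_or_ne j i
  · simp [mul_assoc, hvi]
  · have hvj : v j = 0 := by simpa [hj] using (h j).symm
    simp [hj, hvj]

theorem exists_quaternionMatrix_eq_of_transpose_eq_neg {Y : Matrix (Fin 4) (Fin 4) ℤ}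
    (hskew : Yᵀ = -Y) (horth : Y ∈ orthogonalGroup (Fin 4) ℤ) :
    ∃ χ : ℤˣ, ∃ v, quaternionMatrix (χ : ℤ) v = Y := by
  have hswap (i j : Fin 4) : Y j i = -Y i j := congrFun (congrFun hskew i) j
  have hdiag (i : Fin 4) : Y i i = 0 := by have := hswap i i; omega
  have hrow (i : Fin 4) : ∑ j, Y i j * Y i j = 1 := by
    simpa [Matrix.mul_apply] using
      congrFun (congrFun ((mem_orthogonalGroup_iff _ ℤ).mp horth) i) i
  let v : Fin 3 → ℤ := ![Y 3 2, Y 1 3, Y 2 1]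
  let p : Fin 3 → ℤ := ![Y 1 0, Y 2 0, Y 3 0]
  have h₀ := hrow 0
  have h₁ := hrow 1
  have h₂ := hrow 2
  have h₃ := hrow 3
  simp only [Fin.sum_univ_four, hdiag, hswap 1 0, hswap 2 0, hswap 3 0, hswap 3 2, hswap 1 3,
    hswap 2 1] at h₀ h₁ h₂ h₃
  have hp : p ⬝ᵥ p = 1 := by
    rw [dotProduct, Fin.sum_univ_three]
    change Y 1 0 * Y 1 0 + Y 2 0 * Y 2 0 + Y 3 0 * Y 3 0 = 1
    linarith
  have hsq (k : Fin 3) : p k * p k = v k * v k := by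
    fin_cases k <;> simp [p, v] <;> linarith
  obtain ⟨χ, hχ⟩ := exists_units_smul_eq_of_mul_self_eq hp hsq
  refine ⟨χ, v, ?_⟩
  have hpv (k : Fin 3) : χ * v k = p k := congrFun hχ k
  ext i j
  fin_cases i <;> fin_cases j <;> simp [quaternionMatrix, hpv, hdiag] <;>
    simp [p, v, hswap 1 0, hswap 2 0, hswap 3 0, hswap 3 2, hswap 1 3, hswap 2 1]

theorem isCliffordSystem_quaternionMatrix_iff {ι : Type*} [DecidableEq ι] {χ : ℤˣ}
    {A : Matrix ι (Fin 3) ℤ} :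
    IsCliffordSystem (fun i => quaternionMatrix (χ : ℤ) (A i)) ↔ A * Aᵀ = 1 := by
  have hij (i j : ι) : (-2 * (A i ⬝ᵥ A j)) • (1 : Matrix (Fin 4) (Fin 4) ℤ) =
      (if i = j then (-2 : ℤ) • 1 else 0) ↔ (A * Aᵀ) i j = (1 : Matrix ι ι ℤ) i j := by
    have hmul : (A * Aᵀ) i j = A i ⬝ᵥ A j := rfl
    rw [hmul]
    obtain rfl | h := eq_or_ne i j
    · rw [if_pos rfl, smul_left_inj one_ne_zero, one_apply_eq]
      omega
    · rw [if_neg h, smul_eq_zero_iff_left one_ne_zero, one_apply_ne h]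
      omega
  simp only [IsCliffordSystem, transpose_quaternionMatrix, implies_true, true_and,
    quaternionMatrix_mul_add_mul (Int.units_coe_mul_self χ), hij, ← Matrix.ext_iff]

namespace IsCliffordSystem

variable {ι : Type*} [DecidableEq ι]

theorem mem_orthogonalGroup {d : ℕ} {Y : ι → Matrix (Fin d) (Fin d) ℤ} (hY : IsCliffordSystem Y)
    (i : ι) : Y i ∈ orthogonalGroup (Fin d) ℤ := by
  have h := hY.2 i i
  rw [if_pos rfl, ← two_smul ℤ, neg_smul, ← smul_neg] at h
  rw [mem_orthogonalGroup_iff, hY.1, Matrix.mul_neg, smul_right_injective _ two_ne_zero h, neg_neg]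

theorem chirality_eq {χ : ι → ℤˣ} {v : ι → Fin 3 → ℤ}
    (h : IsCliffordSystem fun i => quaternionMatrix (χ i : ℤ) (v i)) (i j : ι) : χ i = χ j := by
  by_contra hχ
  have hneg : (χ j : ℤ) = -(χ i : ℤ) := by
    rw [Int.units_ne_iff_eq_neg.mp (Ne.symm hχ), Units.val_neg]
  have hij : i ≠ j := fun hij => hχ (congrArg χ hij)
  have hanti := h.2 i j
  have hmem := mul_mem (h.mem_orthogonalGroup i) (h.mem_orthogonalGroup j)
  simp only [hneg] at hanti hmem
  rw [if_neg hij, ← quaternionMatrix_neg_commute (Int.units_coe_mul_self (χ i)),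
    ← two_smul ℤ] at hanti
  rw [(smul_eq_zero.mp hanti).resolve_left two_ne_zero, mem_orthogonalGroup_iff] at hmem
  simp at hmem

theorem exists_quaternionMatrix_eq [Nonempty ι] {Y : ι → Matrix (Fin 4) (Fin 4) ℤ}
    (hY : IsCliffordSystem Y) :
    ∃ χ : ℤˣ, ∃ A : Matrix ι (Fin 3) ℤ,
      A * Aᵀ = 1 ∧ (fun i => quaternionMatrix (χ : ℤ) (A i)) = Y := by
  choose χ A hA using fun i =>
    exists_quaternionMatrix_eq_of_transpose_eq_neg (hY.1 i) (hY.mem_orthogonalGroup i)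
  obtain rfl : (fun i => quaternionMatrix (χ i : ℤ) (A i)) = Y := funext hA
  obtain ⟨i₀⟩ := ‹Nonempty ι›
  have hχ (i : ι) : χ i = χ i₀ := hY.chirality_eq i i₀
  simp only [hχ] at hY ⊢
  exact ⟨χ i₀, A, isCliffordSystem_quaternionMatrix_iff.mp hY, rfl⟩

end IsCliffordSystem

/-- The coordinates, in the basis of the rows of `A ∈ O(3)` with determinant `δ`, of the half
gadget of `1` followed by the quaternion matrices of these rows. -/
def gadgetWeight (δ : ℤ) : Fin 3 → ℤ :=
  ![1 - δ, 1 + δ, 1 - δ]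

theorem halfGadget_vecCons_quaternionMatrix (χ : ℤˣ) {A : Matrix (Fin 3) (Fin 3) ℤ}
    (hA : A ∈ orthogonalGroup (Fin 3) ℤ) :
    halfGadget (vecCons 1 fun i => quaternionMatrix (χ : ℤ) (A i)) =
      quaternionMatrix (χ : ℤ) (gadgetWeight A.det ᵥ* A) := by
  have hdot {i j : Fin 3} (h : i ≠ j) : A i ⬝ᵥ A j = 0 :=
    (congrFun (congrFun ((mem_orthogonalGroup_iff _ ℤ).mp hA) i) j).trans (one_apply_ne h)
  have hmul {i j : Fin 3} (h : i ≠ j) :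
      (quaternionMatrix (χ : ℤ) (A i))ᵀ * quaternionMatrix (χ : ℤ) (A j) =
        -quaternionMatrix (χ : ℤ) (A i ⨯₃ A j) := by
    rw [transpose_quaternionMatrix, Matrix.neg_mul, quaternionMatrix_mul (Int.units_coe_mul_self χ),
      hdot h, zero_smul, sub_zero]
  have hcross := cross_row_of_mem_orthogonalGroup hA
  have h₀₁ : A 0 ⨯₃ A 1 = A.det • A 2 := hcross 0
  have h₁₂ : A 1 ⨯₃ A 2 = A.det • A 0 := hcross 1
  have h₀₂ : A 0 ⨯₃ A 2 = -(A.det • A 1) := by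
    rw [← cross_anticomm]
    exact congrArg Neg.neg (hcross 2)
  have hcoord : gadgetWeight A.det ᵥ* A =
      (1 - A.det) • A 0 + (1 + A.det) • A 1 + (1 - A.det) • A 2 := by
    rw [vecMul_eq_sum, Fin.sum_univ_three]
    rfl
  have hhalf : halfGadget (fun i => quaternionMatrix (χ : ℤ) (A i)) =
      -quaternionMatrix (χ : ℤ) (A 0 ⨯₃ A 1 + A 0 ⨯₃ A 2 + A 1 ⨯₃ A 2) := by
    simp [halfGadget, Fin.sum_univ_three, hmul, add_assoc, add_comm, add_left_comm]
  rw [halfGadget_vecCons_one, hhalf, h₀₁, h₀₂, h₁₂, hcoord, Fin.sum_univ_three]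
  simp only [map_add, map_neg, map_smul]
  module

end Clifford

section Parametrization

/-- The parameters of an adinkra: its first matrix, the chirality of the quaternion units, and the
matrix of the coordinates of these units. -/
abbrev AdinkraParam : Type :=
  orthogonalGroup (Fin 4) ℤ × ℤˣ × orthogonalGroup (Fin 3) ℤ

/-- The adinkra with the given parameters: the first matrix times `1` and the three quaternion
matrices. -/
def adinkraOfParam (x : AdinkraParam) : Adinkra41 :=
  ⟨fun I => x.1.1 * vecCons 1 (fun i => quaternionMatrix (x.2.1 : ℤ) (x.2.2.1 i)) I,
    isAdinkra_iff_gardenRel.mpr <| GardenRel.mul_left (gardenRel_vecCons_one_iff.mpr <|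
      isCliffordSystem_quaternionMatrix_iff.mpr <| (mem_orthogonalGroup_iff _ ℤ).mp x.2.2.2) x.1.2⟩

theorem adinkraOfParam_injective : Function.Injective adinkraOfParam := by
  rintro ⟨P, χ, A⟩ ⟨P', χ', A'⟩ h
  have hI (I : Fin 4) := congrFun (congrArg Subtype.val h) I
  obtain rfl : P = P' := Subtype.ext (by simpa [adinkraOfParam] using hI 0)
  have hrow (i : Fin 3) : χ = χ' ∧ A.1 i = A'.1 i := by
    have hne : A.1 i ≠ 0 := by
      intro h0
      simpa [mul_apply', h0] using congrFun (congrFun ((mem_orthogonalGroup_iff _ ℤ).mp A.2) i) i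
    have hi : P.1 * quaternionMatrix (χ : ℤ) (A.1 i) = P.1 * quaternionMatrix (χ' : ℤ) (A'.1 i) :=
      hI i.succ
    exact quaternionMatrix_injective hne ((Unitary.isUnit_coe (U := P)).mul_left_cancel hi)
  obtain rfl := (hrow 0).1
  obtain rfl : A = A' := Subtype.ext (funext fun i => (hrow i).2)
  rfl

theorem adinkraOfParam_surjective : Function.Surjective adinkraOfParam := by
  rintro ⟨L, hL⟩
  have hP := hL.2.mem_orthogonalGroup 0
  have hcancel := (mem_orthogonalGroup_iff _ ℤ).mp hP
  obtain ⟨Y, hY⟩ : ∃ Y, (fun I => (L 0)ᵀ * L I) = vecCons 1 Y :=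
    ⟨fun i => (L 0)ᵀ * L i.succ, funext <| Fin.cases ((mem_orthogonalGroup_iff' _ ℤ).mp hP)
      fun _ => rfl⟩
  have hrel := hL.2.mul_left (transpose_mem_unitaryGroup_iff.mpr hP)
  rw [hY, gardenRel_vecCons_one_iff] at hrel
  obtain ⟨χ, A, hA, rfl⟩ := hrel.exists_quaternionMatrix_eq
  refine ⟨(⟨L 0, hP⟩, χ, ⟨A, (mem_orthogonalGroup_iff _ ℤ).mpr hA⟩),
    Subtype.ext (funext fun I => ?_)⟩
  change L 0 * vecCons 1 _ I = L I
  rw [← congrFun hY I, ← Matrix.mul_assoc, hcancel, Matrix.one_mul]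

/-- The parametrization of all adinkras. -/
noncomputable def adinkraEquiv : AdinkraParam ≃ Adinkra41 :=
  Equiv.ofBijective adinkraOfParam ⟨adinkraOfParam_injective, adinkraOfParam_surjective⟩

theorem SG_adinkraOfParam (x y : AdinkraParam) :
    SG (adinkraOfParam x).1 (adinkraOfParam y).1 =
      -2 * (1 + x.2.1 * y.2.1) *
        (gadgetWeight x.2.2.1.det ᵥ* x.2.2.1 ⬝ᵥ gadgetWeight y.2.2.1.det ᵥ* y.2.2.1) := by
  rw [SG_eq_trace]
  simp only [adinkraOfParam, halfGadget_mul_left x.1.2, halfGadget_mul_left y.1.2,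
    halfGadget_vecCons_quaternionMatrix _ x.2.2.2, halfGadget_vecCons_quaternionMatrix _ y.2.2.2,
    trace_quaternionMatrix_mul]

end Parametrization

section Counting

theorem vecMul_dotProduct_vecMul_orthogonalGroup {n R : Type*} [Fintype n]
    [DecidableEq n] [CommRing R] (A B : orthogonalGroup n R) (v w : n → R) :
    v ᵥ* A.1 ⬝ᵥ w ᵥ* B.1 = v ᵥ* (A * B⁻¹).1 ⬝ᵥ w := by
  have hinv : (A * B⁻¹).1 = A.1 * B.1ᵀ := rfl
  rw [hinv, ← vecMul_vecMul, ← dotProduct_mulVec _ B.1ᵀ, mulVec_transpose]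

/-- The symmetrized gadget of adinkras with chiralities `χ`, `χ'` and coordinate matrices `B * A`
and `A`, where `δ` is the determinant of `A`. -/
def relativeGadget (χ χ' δ : ℤ) (B : Matrix (Fin 3) (Fin 3) ℤ) : ℤ :=
  -2 * (1 + χ * χ') * (gadgetWeight (B.det * δ) ᵥ* B ⬝ᵥ gadgetWeight δ)

theorem SG_adinkraOfParam_mul (P P' : orthogonalGroup (Fin 4) ℤ) (χ χ' : ℤˣ)
    (A B : orthogonalGroup (Fin 3) ℤ) :
    SG (adinkraOfParam (P, χ, B * A)).1 (adinkraOfParam (P', χ', A)).1 =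
      relativeGadget χ χ' A.1.det B := by
  rw [SG_adinkraOfParam, vecMul_dotProduct_vecMul_orthogonalGroup, mul_inv_cancel_right,
    relativeGadget, UnitaryGroup.mul_val, det_mul]

/-- Pairs of adinkras, parametrized by the first matrices, the chiralities, the coordinate matrix
`A` of the second adinkra and the coordinate matrix `B` of the first relative to the second. -/
noncomputable def adinkraPairEquiv :
    (orthogonalGroup (Fin 4) ℤ × orthogonalGroup (Fin 4) ℤ) × (ℤˣ × ℤˣ) ×
      orthogonalGroup (Fin 3) ℤ × orthogonalGroup (Fin 3) ℤ ≃ Adinkra41 × Adinkra41 :=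
  let relative : (orthogonalGroup (Fin 4) ℤ × orthogonalGroup (Fin 4) ℤ) × (ℤˣ × ℤˣ) ×
      orthogonalGroup (Fin 3) ℤ × orthogonalGroup (Fin 3) ℤ ≃ AdinkraParam × AdinkraParam :=
    { toFun x := ((x.1.1, x.2.1.1, x.2.2.2 * x.2.2.1), (x.1.2, x.2.1.2, x.2.2.1))
      invFun y := ((y.1.1, y.2.1), (y.1.2.1, y.2.2.1), (y.2.2.2, y.1.2.2 * y.2.2.2⁻¹))
      left_inv x := by simp
      right_inv y := by simp }
  relative.trans (adinkraEquiv.prodCongr adinkraEquiv)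

theorem sum_relativeGadget_eq (χ χ' : ℤˣ) (v : ℤ) :
    ∑ A : orthogonalGroup (Fin 3) ℤ, ∑ B : orthogonalGroup (Fin 3) ℤ,
      (if relativeGadget χ χ' A.1.det B = v then 1 else 0) =
    24 * ∑ δ : ℤˣ, Finset.card {p | relativeGadget χ χ' δ (signedPermMatrix p) = v} := by
  have hcard : Fintype.card (orthogonalGroup (Fin 3) ℤ) = 48 := card_orthogonalGroup_int
  have hB (δ : ℤ) :
      ∑ B : orthogonalGroup (Fin 3) ℤ, (if relativeGadget χ χ' δ B = v then 1 else 0) =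
        Finset.card {p | relativeGadget χ χ' δ (signedPermMatrix p) = v} := by
    rw [Finset.card_filter, ← Equiv.sum_comp signedPermEquiv]
    rfl
  have hdet := two_mul_sum_comp_det_orthogonalGroup_int (n := Fin 3) (by decide) fun δ =>
    Finset.card {p | relativeGadget χ χ' δ (signedPermMatrix p) = v}
  rw [hcard] at hdet
  simp only [hB]
  omega

theorem card_SG_eq (v : ℤ) :
    Nat.card {p : Adinkra41 × Adinkra41 // SG p.1.1 p.2.1 = v} =
      384 ^ 2 * 24 * ∑ χ : ℤˣ, ∑ χ' : ℤˣ, ∑ δ : ℤˣ,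
        Finset.card {p | relativeGadget χ χ' δ (signedPermMatrix p) = v} := by
  have hO₄ : Fintype.card (orthogonalGroup (Fin 4) ℤ) = 384 := card_orthogonalGroup_int
  rw [← Nat.card_congr (adinkraPairEquiv.subtypeEquiv (p := fun x =>
      relativeGadget x.2.1.1 x.2.1.2 x.2.2.1.1.det x.2.2.2 = v)
      fun x => by rw [← SG_adinkraOfParam_mul x.1.1 x.1.2]; rfl),
    Nat.card_eq_fintype_card, Fintype.card_subtype, Finset.card_filter]
  simp only [Fintype.sum_prod_type, sum_relativeGadget_eq, Finset.sum_const, Finset.card_univ,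
    Fintype.card_prod, hO₄, smul_eq_mul, ← Finset.mul_sum]
  ring

end Counting

theorem stmt19 :
    Nat.card {p : Adinkra41 × Adinkra41 // SG p.1.1 p.2.1 = 32} = 14155776 ∧
    Nat.card {p : Adinkra41 × Adinkra41 // SG p.1.1 p.2.1 = -32} = 14155776 ∧
    Nat.card {p : Adinkra41 × Adinkra41 // SG p.1.1 p.2.1 = 16} = 198180864 ∧
    Nat.card {p : Adinkra41 × Adinkra41 // SG p.1.1 p.2.1 = -16} = 198180864 ∧
    Nat.card {p : Adinkra41 × Adinkra41 // SG p.1.1 p.2.1 = 0} = 934281216 := by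
  simp only [card_SG_eq]
  decide +kernel
end
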